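/- (Shrinkage equals Tikhonov regularization.) Let Σ be a real m×m matrix, let I, J ⊆ {1,…,m} be disjoint index sets, let α ∈ (0,1), let c = Trace(Σ)/m, and define the shrinkage estimator Σ_α = (1−α)Σ + αc·I_m. Set λ = αc/(1−α). If Σ_{I,I} + λI is invertible, then (Σ_α)_{I,I} is invertible and (Σ_α)_{I,I}⁻¹(Σ_α)_{I,J} = (Σ_{I,I} + λI)⁻¹Σ_{I,J}; that is, the MVN prediction coefficient computed from the shrinkage covariance matrix equals the Tikhonov-regularized (ridge) coefficient computed from the original covariance matrix with regularization parameter λ. -/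

import Mathlib

open Matrix

/-! The shrinkage target is a multiple of the identity, so its `(I, J)` block vanishes for disjoint
`I`, `J` and its `(I, I)` block is scalar. Hence `(Σ_α)_{I,J} = (1 - α) Σ_{I,J}` and
`(Σ_α)_{I,I} = (1 - α) (Σ_{I,I} + λ I)`, and the factor `1 - α` cancels in the coefficient. -/

theorem submatrix_one_of_disjoint_range {n ι κ R : Type*} [DecidableEq n] [Zero R] [One R]
    {e : ι → n} {f : κ → n} (hef : Disjoint (Set.range e) (Set.range f)) :
    (1 : Matrix n n R).submatrix e f = 0 := by
  ext i j
  exact one_apply_ne (Set.disjoint_range_iff.mp hef i j)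

theorem inv_units_smul_mul_units_smul {ι κ R : Type*} [Fintype ι] [DecidableEq ι] [CommRing R]
    (u : Rˣ) {A : Matrix ι ι R} (hA : IsUnit A) (B : Matrix ι κ R) :
    (u • A)⁻¹ * (u • B) = A⁻¹ * B := by
  rw [inv_smul' A u ((isUnit_iff_isUnit_det A).mp hA), Matrix.smul_mul, Matrix.mul_smul,
    inv_smul_smul]

/-- The linear shrinkage of `S` with coefficient `α` toward the scalar matrix `c • 1`. The scale `c`
is a free parameter; the shrinkage estimator of a covariance matrix takes `c` to be the mean of the
diagonal entries of `S`. -/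
def shrinkage {n R : Type*} [DecidableEq n] [Ring R] (S : Matrix n n R) (α c : R) :
    Matrix n n R :=
  (1 - α) • S + (α * c) • 1

theorem shrinkage_submatrix_of_disjoint_range {n ι κ R : Type*} [DecidableEq n] [Ring R]
    {e : ι → n} {f : κ → n} (hef : Disjoint (Set.range e) (Set.range f)) (S : Matrix n n R)
    (α c : R) :
    (shrinkage S α c).submatrix e f = (1 - α) • S.submatrix e f := by
  simp only [shrinkage, submatrix_add, submatrix_smul, Pi.add_apply, Pi.smul_apply,
    submatrix_one_of_disjoint_range hef, smul_zero, add_zero]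

section Field

variable {n ι κ K : Type*} [DecidableEq n] [DecidableEq ι] [Field K] {e : ι → n}

theorem shrinkage_submatrix_of_injective (he : Function.Injective e) (S : Matrix n n K) {α : K}
    (hα : α ≠ 1) (c : K) :
    (shrinkage S α c).submatrix e e =
      (1 - α) • (S.submatrix e e + (α * c / (1 - α)) • (1 : Matrix ι ι K)) := by
  simp only [shrinkage, submatrix_add, submatrix_smul, Pi.add_apply, Pi.smul_apply,
    submatrix_one e he, smul_add, smul_smul, mul_div_cancel₀ _ (sub_ne_zero.mpr hα.symm)]

theorem shrinkage_eq_tikhonov_general [Fintype ι] {f : κ → n} (he : Function.Injective e)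
    (hef : Disjoint (Set.range e) (Set.range f)) (S : Matrix n n K) {α : K} (hα : α ≠ 1) (c : K)
    (hinv : IsUnit (S.submatrix e e + (α * c / (1 - α)) • (1 : Matrix ι ι K))) :
    IsUnit ((shrinkage S α c).submatrix e e) ∧
      ((shrinkage S α c).submatrix e e)⁻¹ * (shrinkage S α c).submatrix e f =
        (S.submatrix e e + (α * c / (1 - α)) • (1 : Matrix ι ι K))⁻¹ * S.submatrix e f := by
  rw [shrinkage_submatrix_of_injective he S hα, shrinkage_submatrix_of_disjoint_range hef]
  let u : Kˣ := Units.mk0 (1 - α) (sub_ne_zero.mpr hα.symm)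
  exact ⟨hinv.smul u, inv_units_smul_mul_units_smul u hinv _⟩

end Field

/-- Shrinkage equals Tikhonov regularization: with `Σ_α = (1−α)Σ + α(Trace Σ/m)·I` and
`λ = αc/(1−α)`, if `Σ_{I,I} + λI` is invertible then `(Σ_α)_{I,I}` is invertible and
`(Σ_α)_{I,I}⁻¹(Σ_α)_{I,J} = (Σ_{I,I} + λI)⁻¹Σ_{I,J}` for disjoint `I`, `J`. -/
theorem shrinkage_eq_tikhonov {m : ℕ}
    (Sig : Matrix (Fin m) (Fin m) ℝ) (I J : Finset (Fin m)) (hIJ : Disjoint I J)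
    (α : ℝ) (hα : α ∈ Set.Ioo (0 : ℝ) 1)
    (c lam : ℝ) (hc : c = Sig.trace / m) (hlam : lam = α * c / (1 - α))
    (Sa : Matrix (Fin m) (Fin m) ℝ)
    (hSa : Sa = (1 - α) • Sig + (α * c) • (1 : Matrix (Fin m) (Fin m) ℝ))
    (hinv : IsUnit (Sig.submatrix (Subtype.val : {j // j ∈ I} → Fin m)
        (Subtype.val : {j // j ∈ I} → Fin m) + lam • 1)) :
    IsUnit (Sa.submatrix (Subtype.val : {j // j ∈ I} → Fin m)
        (Subtype.val : {j // j ∈ I} → Fin m)) ∧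
    (Sa.submatrix (Subtype.val : {j // j ∈ I} → Fin m)
          (Subtype.val : {j // j ∈ I} → Fin m))⁻¹ *
        Sa.submatrix (Subtype.val : {j // j ∈ I} → Fin m)
          (Subtype.val : {j // j ∈ J} → Fin m)
      = (Sig.submatrix (Subtype.val : {j // j ∈ I} → Fin m)
            (Subtype.val : {j // j ∈ I} → Fin m) + lam • 1)⁻¹ *
          Sig.submatrix (Subtype.val : {j // j ∈ I} → Fin m)
            (Subtype.val : {j // j ∈ J} → Fin m) := by
  subst hlam hSa
  exact shrinkage_eq_tikhonov_general Subtype.val_injective (by simpa using hIJ) Sig hα.2.ne c hinv
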